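/- Under Assumptions 1–3, suppose π′ ∈ Π minimizes the augmented Lagrangian π ↦ L(π, λ, ρ) = −J(π) + (1/(2ρ))‖max{0, λ + ρF(π)}‖² − (1/(2ρ))‖λ‖² over Π for some λ ∈ H₊ and ρ > 0, and set λ′ = max{0, λ + ρF(π′)} (pointwise positive part). Then −F(π′) is a subgradient of −d at λ′: for every μ ∈ H, −d(μ) ≥ −d(λ′) + ⟨−F(π′), μ − λ′⟩. -/

import Mathlib

/-!
Put `λ' = (λ + ρ F(π'))⁺`. Along the segment from `π'` towards a policy `π`, convexity of `F` and
solidity of the norm bound the increase of the augmented Lagrangian by `t` times the increase of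
the ordinary Lagrangian `-J + ⟪λ', F⟫` plus a term `O(t²)`. Letting `t → 0` shows that the
minimizer `π'` of the augmented Lagrangian also minimizes the ordinary Lagrangian at `λ'`. Hence
`π'` attains the infimum `d(λ')`, and comparing with the value at `π'` of the Lagrangian at another
multiplier gives the subgradient inequality.
-/

open MeasureTheory Filter
open scoped RealInnerProductSpace

open scoped Topology

lemma nonneg_of_forall_mul_add_sq_mul_nonneg {a c : ℝ}
    (h : ∀ t : ℝ, 0 < t → t ≤ 1 → 0 ≤ t * a + t ^ 2 * c) : 0 ≤ a := by
  have h_lim : Tendsto (fun t : ℝ => a + t * c) (𝓝[>] 0) (𝓝 a) := by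
    have h_cont : Continuous fun t : ℝ => a + t * c := by fun_prop
    simpa only [zero_mul, add_zero] using (h_cont.tendsto 0).mono_left nhdsWithin_le_nhds
  refine ge_of_tendsto h_lim ?_
  filter_upwards [Ioc_mem_nhdsGT one_pos] with t ⟨ht0, ht1⟩
  refine nonneg_of_mul_nonneg_right ?_ ht0
  linear_combination h t ht0 ht1

section Convexity

variable {𝕜 E β : Type*} [Ring 𝕜] [PartialOrder 𝕜] [IsOrderedAddMonoid 𝕜] [AddCommMonoid E]
  [SMul 𝕜 E] [AddCommMonoid β] [PartialOrder β] [SMul 𝕜 β] {s : Set E} {f : E → β}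

lemma convexOn_of_forall_unitInterval (hs : Convex 𝕜 s)
    (h : ∀ x ∈ s, ∀ y ∈ s, ∀ t : 𝕜, 0 ≤ t → t ≤ 1 →
      f (t • x + (1 - t) • y) ≤ t • f x + (1 - t) • f y) : ConvexOn 𝕜 s f := by
  refine ⟨hs, fun x hx y hy a b ha hb hab => ?_⟩
  obtain rfl : b = 1 - a := eq_sub_of_add_eq' hab
  exact h x hx y hy a ha (sub_nonneg.mp hb)

lemma concaveOn_of_forall_unitInterval (hs : Convex 𝕜 s)
    (h : ∀ x ∈ s, ∀ y ∈ s, ∀ t : 𝕜, 0 ≤ t → t ≤ 1 →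
      t • f x + (1 - t) • f y ≤ f (t • x + (1 - t) • y)) : ConcaveOn 𝕜 s f :=
  convexOn_of_forall_unitInterval (β := βᵒᵈ) hs h

end Convexity

lemma Lp_posPart_eq {α : Type*} [MeasurableSpace α] {μ : Measure α} {p : ENNReal}
    (f : Lp ℝ p μ) : Lp.posPart f = f⁺ := by
  apply Lp.ext
  filter_upwards [Lp.coeFn_posPart f, Lp.coeFn_sup f 0, Lp.coeFn_zero ℝ p μ]
    with x h_posPart h_sup h_zero
  rw [h_posPart, posPart_def, h_sup, Pi.sup_apply, h_zero, Pi.zero_apply]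

section LpOrder

variable {𝕜 α G : Type*} [MeasurableSpace α] {μ : Measure α} {p : ENNReal} [NormedRing 𝕜]
  [PartialOrder 𝕜] [NormedAddCommGroup G] [PartialOrder G] [Module 𝕜 G] [IsBoundedSMul 𝕜 G]

instance instPosSMulMonoLp [PosSMulMono 𝕜 G] :
    PosSMulMono 𝕜 (Lp G p μ) where
  smul_le_smul_of_nonneg_left c hc f g hfg := by
    rw [← Lp.coeFn_le] at hfg ⊢
    filter_upwards [hfg, Lp.coeFn_smul c f, Lp.coeFn_smul c g] with x hx hf hg
    rw [hf, hg]
    exact smul_le_smul_of_nonneg_left hx hc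

lemma convexOn_Lp_of_forall_ae_le [IsOrderedAddMonoid 𝕜] {E : Type*}
    [AddCommMonoid E] [SMul 𝕜 E] {s : Set E} {F : E → Lp G p μ} (hs : Convex 𝕜 s)
    (h : ∀ x ∈ s, ∀ y ∈ s, ∀ t : 𝕜, 0 ≤ t → t ≤ 1 →
      ∀ᵐ a ∂μ, F (t • x + (1 - t) • y) a ≤ t • F x a + (1 - t) • F y a) :
    ConvexOn 𝕜 s F := by
  refine convexOn_of_forall_unitInterval hs fun x hx y hy t ht0 ht1 => ?_
  rw [← Lp.coeFn_le]
  filter_upwards [h x hx y hy t ht0 ht1, Lp.coeFn_add (t • F x) ((1 - t) • F y),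
    Lp.coeFn_smul t (F x), Lp.coeFn_smul (1 - t) (F y)] with a h_le h_add h_left h_right
  rwa [h_add, Pi.add_apply, h_left, h_right]

end LpOrder

lemma norm_posPart_le_norm_posPart_add {H : Type*} [NormedAddCommGroup H] [Lattice H]
    [HasSolidNorm H] [IsOrderedAddMonoid H] {g h k : H} (hle : h ≤ g + k) :
    ‖h⁺‖ ≤ ‖g⁺ + k‖ := by
  apply norm_le_norm_of_abs_le_abs
  rw [abs_of_nonneg (posPart_nonneg h)]
  have h_le_abs : h ≤ |g⁺ + k| := calc
    h ≤ g + k := hle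
    _ ≤ g⁺ + k := by gcongr; exact le_posPart g
    _ ≤ |g⁺ + k| := le_abs_self _
  exact sup_le h_le_abs (abs_nonneg _)

section Lagrangian

variable {E H : Type*} [NormedAddCommGroup H] [InnerProductSpace ℝ H]

/-- The Lagrangian `-J(π) + ⟪λ, F(π)⟫` of maximizing `J` subject to `F ≤ 0`, with multiplier `λ`
written `lam`. -/
def lagrangian (J : E → ℝ) (F : E → H) (lam : H) (π : E) : ℝ :=
  -J π + ⟪lam, F π⟫

/-- The dual function `d(λ)`, the infimum over `s` of the Lagrangian at `λ`. It is real-valued, so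
it carries meaning only where the Lagrangian is bounded below on `s`. -/
noncomputable def dualFunction (J : E → ℝ) (F : E → H) (s : Set E) (lam : H) : ℝ :=
  sInf (lagrangian J F lam '' s)

/-- The augmented Lagrangian `L(π, λ, ρ)` with penalty parameter `ρ`. The pointwise positive part
of the paper is the positive part of the lattice `H`. -/
noncomputable def augmentedLagrangian [Lattice H] (J : E → ℝ) (F : E → H) (lam : H) (ρ : ℝ)
    (π : E) : ℝ :=
  -J π + 1 / (2 * ρ) * ‖(lam + ρ • F π)⁺‖ ^ 2 - 1 / (2 * ρ) * ‖lam‖ ^ 2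

variable {J : E → ℝ} {F : E → H} {s : Set E}

lemma bddBelow_lagrangian_image {MJ MF : ℝ} (hJ : ∀ π ∈ s, J π ≤ MJ)
    (hF : ∀ π ∈ s, ‖F π‖ ≤ MF) (lam : H) : BddBelow (lagrangian J F lam '' s) := by
  refine ⟨-MJ - ‖lam‖ * MF, Set.forall_mem_image.mpr fun π hπ => ?_⟩
  have h_inner : -(‖lam‖ * ‖F π‖) ≤ ⟪lam, F π⟫ :=
    neg_le_of_abs_le (abs_real_inner_le_norm lam (F π))
  have h_norm : ‖lam‖ * ‖F π‖ ≤ ‖lam‖ * MF := by gcongr; exact hF π hπ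
  unfold lagrangian
  linarith [hJ π hπ]

lemma dualFunction_le_lagrangian {lam : H} (hbdd : BddBelow (lagrangian J F lam '' s)) {π : E}
    (hπ : π ∈ s) : dualFunction J F s lam ≤ lagrangian J F lam π :=
  csInf_le hbdd (Set.mem_image_of_mem _ hπ)

lemma dualFunction_eq_of_isMinOn {lam : H} {π : E} (hπ : π ∈ s)
    (hmin : IsMinOn (lagrangian J F lam) s π) :
    dualFunction J F s lam = lagrangian J F lam π :=
  IsLeast.csInf_eq ⟨Set.mem_image_of_mem _ hπ, Set.forall_mem_image.mpr hmin⟩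

lemma lagrangian_eq_add_inner_sub (lam m : H) (π : E) :
    lagrangian J F m π = lagrangian J F lam π + ⟪F π, m - lam⟫ := by
  rw [lagrangian, lagrangian, inner_sub_right, real_inner_comm m, real_inner_comm lam]
  ring

lemma neg_dualFunction_subgradient_of_isMinOn {lam m : H} {π : E} (hπ : π ∈ s)
    (hmin : IsMinOn (lagrangian J F lam) s π) (hbdd : BddBelow (lagrangian J F m '' s)) :
    -dualFunction J F s lam + ⟪-F π, m - lam⟫ ≤ -dualFunction J F s m := by
  have h_dual_le := dualFunction_le_lagrangian hbdd hπ
  rw [lagrangian_eq_add_inner_sub lam m π] at h_dual_le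
  rw [dualFunction_eq_of_isMinOn hπ hmin, inner_neg_left]
  linarith

end Lagrangian

section AugmentedLagrangian

variable {E H : Type*} [AddCommMonoid E] [Module ℝ E] [NormedAddCommGroup H]
  [InnerProductSpace ℝ H] [Lattice H] [HasSolidNorm H] [IsOrderedAddMonoid H] [PosSMulMono ℝ H]
  {J : E → ℝ} {F : E → H} {s : Set E} {lam : H} {ρ : ℝ}

lemma sq_norm_posPart_add_smul_le (hρ : 0 < ρ) {t : ℝ} {f g h : H}
    (hle : h ≤ t • f + (1 - t) • g) :
    1 / (2 * ρ) * ‖(lam + ρ • h)⁺‖ ^ 2 ≤ 1 / (2 * ρ) * ‖(lam + ρ • g)⁺‖ ^ 2 +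
      t * ⟪(lam + ρ • g)⁺, f - g⟫ + t ^ 2 * (ρ / 2 * ‖f - g‖ ^ 2) := by
  have h_shift : lam + ρ • h ≤ lam + ρ • g + (t * ρ) • (f - g) := calc
    lam + ρ • h ≤ lam + ρ • (t • f + (1 - t) • g) := by gcongr
    _ = lam + ρ • g + (t * ρ) • (f - g) := by module
  calc 1 / (2 * ρ) * ‖(lam + ρ • h)⁺‖ ^ 2
      ≤ 1 / (2 * ρ) * ‖(lam + ρ • g)⁺ + (t * ρ) • (f - g)‖ ^ 2 := by
        gcongr
        exact norm_posPart_le_norm_posPart_add h_shift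
    _ = 1 / (2 * ρ) * ‖(lam + ρ • g)⁺‖ ^ 2 + t * ⟪(lam + ρ • g)⁺, f - g⟫ +
          t ^ 2 * (ρ / 2 * ‖f - g‖ ^ 2) := by
        rw [norm_add_sq_real, inner_smul_right, norm_smul, mul_pow, Real.norm_eq_abs, sq_abs]
        field_simp

lemma augmentedLagrangian_segment_le (hJ : ConcaveOn ℝ s J) (hF : ConvexOn ℝ s F) (hρ : 0 < ρ)
    {x y : E} (hx : x ∈ s) (hy : y ∈ s) {t : ℝ} (ht0 : 0 ≤ t) (ht1 : t ≤ 1) :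
    augmentedLagrangian J F lam ρ (t • x + (1 - t) • y) ≤ augmentedLagrangian J F lam ρ y +
      t * (lagrangian J F (lam + ρ • F y)⁺ x - lagrangian J F (lam + ρ • F y)⁺ y) +
      t ^ 2 * (ρ / 2 * ‖F x - F y‖ ^ 2) := by
  have h_return : t * J x + (1 - t) * J y ≤ J (t • x + (1 - t) • y) :=
    hJ.2 hx hy ht0 (sub_nonneg.mpr ht1) (add_sub_cancel t 1)
  have h_penalty := sq_norm_posPart_add_smul_le (lam := lam) hρ
    (hF.2 hx hy ht0 (sub_nonneg.mpr ht1) (add_sub_cancel t 1))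
  rw [inner_sub_right] at h_penalty
  unfold augmentedLagrangian lagrangian
  linarith

lemma isMinOn_lagrangian_of_isMinOn_augmentedLagrangian (hJ : ConcaveOn ℝ s J)
    (hF : ConvexOn ℝ s F) (hρ : 0 < ρ) {y : E} (hy : y ∈ s)
    (hmin : IsMinOn (augmentedLagrangian J F lam ρ) s y) :
    IsMinOn (lagrangian J F (lam + ρ • F y)⁺) s y := by
  refine isMinOn_iff.mpr fun x hx => sub_nonneg.mp ?_
  refine nonneg_of_forall_mul_add_sq_mul_nonneg (c := ρ / 2 * ‖F x - F y‖ ^ 2)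
    fun t ht0 ht1 => ?_
  have h_mem : t • x + (1 - t) • y ∈ s :=
    hF.1 hx hy ht0.le (sub_nonneg.mpr ht1) (add_sub_cancel t 1)
  have h_min := isMinOn_iff.mp hmin _ h_mem
  have h_segment := augmentedLagrangian_segment_le (lam := lam) hJ hF hρ hx hy ht0.le ht1
  linarith

theorem stmt_3_general (hJ : ConcaveOn ℝ s J) (hF : ConvexOn ℝ s F) (hρ : 0 < ρ) {y : E}
    (hy : y ∈ s) (hmin : IsMinOn (augmentedLagrangian J F lam ρ) s y) {m : H}
    (hbdd : BddBelow (lagrangian J F m '' s)) :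
    -dualFunction J F s (lam + ρ • F y)⁺ + ⟪-F y, m - (lam + ρ • F y)⁺⟫ ≤
      -dualFunction J F s m :=
  neg_dualFunction_subgradient_of_isMinOn hy
    (isMinOn_lagrangian_of_isMinOn_augmentedLagrangian hJ hF hρ hy hmin) hbdd

end AugmentedLagrangian

/-- under Assumptions 1–3, if `π'` minimizes the augmented Lagrangian
`π ↦ -J(π) + (1/(2ρ))‖max{0, λ + ρF(π)}‖² - (1/(2ρ))‖λ‖²` over `Π` for some `λ ∈ H₊` and
`ρ > 0`, and `λ' = max{0, λ + ρF(π')}` (pointwise positive part), then `-F(π')` is a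
subgradient of `-d` at `λ'`: `-d(m) ≥ -d(λ') + ⟪-F(π'), m - λ'⟫` for every `m ∈ H`. -/
theorem stmt_3 {α : Type*} [MeasurableSpace α] {μ : Measure α}
    {E : Type*} [NormedAddCommGroup E] [InnerProductSpace ℝ E] [CompleteSpace E]
    (Pi : Set E) (J : E → ℝ) (F : E → Lp ℝ 2 μ)
    -- Assumption 1 (boundedness)
    (MJ MF : ℝ) (hMJ : ∀ π ∈ Pi, |J π| ≤ MJ) (hMF : ∀ π ∈ Pi, ‖F π‖ ≤ MF)
    -- Assumption 2 (strong continuity along weakly convergent sequences)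
    (hcont : ∀ (πseq : ℕ → E) (π : E), (∀ n, πseq n ∈ Pi) → π ∈ Pi →
      (∀ z : E, Tendsto (fun n => ⟪πseq n, z⟫) atTop (nhds ⟪π, z⟫)) →
      Tendsto (fun n => J (πseq n)) atTop (nhds (J π)) ∧
        Tendsto (fun n => ‖F (πseq n) - F π‖) atTop (nhds 0))
    -- Assumption 3 (convexity)
    (hPiconv : Convex ℝ Pi)
    (hJconc : ∀ π₁ ∈ Pi, ∀ π₂ ∈ Pi, ∀ t : ℝ, 0 ≤ t → t ≤ 1 →
      t * J π₁ + (1 - t) * J π₂ ≤ J (t • π₁ + (1 - t) • π₂))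
    (hFconv : ∀ π₁ ∈ Pi, ∀ π₂ ∈ Pi, ∀ t : ℝ, 0 ≤ t → t ≤ 1 →
      ∀ᵐ x ∂μ, F (t • π₁ + (1 - t) • π₂) x ≤ t * F π₁ x + (1 - t) * F π₂ x)
    -- dual function
    (d : Lp ℝ 2 μ → ℝ)
    (hd : ∀ lam : Lp ℝ 2 μ, d lam = sInf ((fun π => -J π + ⟪lam, F π⟫) '' Pi))
    -- data of the statement
    (lam : Lp ℝ 2 μ) (hlam : 0 ≤ᵐ[μ] ⇑lam) (ρ : ℝ) (hρ : 0 < ρ)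
    (pi' : E) (hpi'Pi : pi' ∈ Pi)
    (hmin : ∀ π ∈ Pi,
      -J pi' + 1 / (2 * ρ) * ‖Lp.posPart (lam + ρ • F pi')‖ ^ 2 - 1 / (2 * ρ) * ‖lam‖ ^ 2
        ≤ -J π + 1 / (2 * ρ) * ‖Lp.posPart (lam + ρ • F π)‖ ^ 2
          - 1 / (2 * ρ) * ‖lam‖ ^ 2)
    (lam' : Lp ℝ 2 μ) (hlam' : lam' = Lp.posPart (lam + ρ • F pi')) :
    ∀ m : Lp ℝ 2 μ, -d lam' + ⟪-F pi', m - lam'⟫ ≤ -d m := by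
  intro m
  obtain rfl : d = dualFunction J F Pi := funext hd
  simp only [Lp_posPart_eq] at hmin hlam'
  rw [hlam']
  exact stmt_3_general (concaveOn_of_forall_unitInterval hPiconv hJconc)
    (convexOn_Lp_of_forall_ae_le hPiconv hFconv) hρ hpi'Pi hmin
    (bddBelow_lagrangian_image (fun π hπ => le_of_abs_le (hMJ π hπ)) hMF m)
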